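/- Let G be a non-bipartite graph of order n. If the largest adjacency eigenvalue of G is at least that of S(K_{⌊(n−1)/2⌋,⌈(n−1)/2⌉}), the graph obtained from the complete bipartite graph K_{⌊(n−1)/2⌋,⌈(n−1)/2⌉} by subdividing one edge, then G contains a triangle unless G is isomorphic to S(K_{⌊(n−1)/2⌋,⌈(n−1)/2⌉}). -/

import Mathlib

open Matrix Finset

/-- The adjacency matrix of a finite simple graph is Hermitian (over `ℝ`). -/
theorem adjMatrix_isHermitian {V : Type*} [Fintype V] [DecidableEq V]
    (G : SimpleGraph V) [DecidableRel G.Adj] : (G.adjMatrix ℝ).IsHermitian := by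
  unfold Matrix.IsHermitian
  rw [Matrix.conjTranspose_eq_transpose_of_trivial]
  exact G.isSymm_adjMatrix

/-- The eigenvalues of the adjacency matrix of `G`, as a tuple indexed by `Fin (card V)`. -/
noncomputable def adjEig {V : Type*} [Fintype V] [DecidableEq V]
    (G : SimpleGraph V) [DecidableRel G.Adj] : Fin (Fintype.card V) → ℝ :=
  fun i => (adjMatrix_isHermitian G).eigenvalues ((Fintype.equivFin V).symm i)

/-- `kthEig G k` is the `(k+1)`-st largest adjacency eigenvalue of `G`
(so `kthEig G 0 = λ₁`, `kthEig G 1 = λ₂`, ...); it is `0` if `k` is out of range. -/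
noncomputable def kthEig {V : Type*} [Fintype V] [DecidableEq V]
    (G : SimpleGraph V) [DecidableRel G.Adj] (k : ℕ) : ℝ :=
  if h : k < Fintype.card V then
    adjEig G (Tuple.sort (adjEig G) (Fin.rev ⟨k, h⟩))
  else 0


/-- `SKab a b` : the complete bipartite graph `K_{a,b}` with one edge
(the edge between the first vertex on each side) subdivided by a new vertex. -/
def SKab (a b : ℕ) : SimpleGraph (Fin a ⊕ Fin b ⊕ Unit) :=
  SimpleGraph.fromRel (fun u v =>
    match u, v with
    | Sum.inl i, Sum.inr (Sum.inl j) => ¬(i.val = 0 ∧ j.val = 0)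
    | Sum.inl i, Sum.inr (Sum.inr _) => i.val = 0
    | Sum.inr (Sum.inl j), Sum.inr (Sum.inr _) => j.val = 0
    | _, _ => False)

noncomputable instance (a b : ℕ) : DecidableRel (SKab a b).Adj := Classical.decRel _

/-!
Let `G` be triangle-free and let `x` be a nonnegative eigenvector for `λ₁(G)`, with maximum at `u`.
Applying the adjacency matrix twice gives `λ₁(G)² ≤ ∑ v ∈ N(u), deg v`, while
`λ₁(S(K_{a+1,b+1}))² > (a + 1)(b + 1) - 2`. Hence the bipartite graph between `N(u)` and its
complement misses so few edges that the complement becomes independent after the removal of one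
vertex `w`, and `w` has at most one neighbour `p` on one of the two sides.

If `x w ≤ x p`, moving edges from `w` to `p` and filling up the bipartite part turns `G` into a
subdivided complete bipartite graph without decreasing the Rayleigh quotient of `x`; otherwise `w`
and `p` exchange roles. Equality forces `G` to be that graph, because `x` is then a positive
eigenvector of both graphs. Finally, for `s + t` fixed, the characteristic polynomial of the
five-cell quotient of `S(K_{s+1,t+1})` depends on `s` and `t` only through `s * t`, so that `λ₁` is
largest for balanced parts.
-/

section LargestEigenvalue

variable {V : Type*} [Fintype V] [DecidableEq V] (G : SimpleGraph V) [DecidableRel G.Adj]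

theorem eigenvalues_le_kthEig_zero (v : V) :
    (adjMatrix_isHermitian G).eigenvalues v ≤ kthEig G 0 := by
  have card_pos : 0 < Fintype.card V := Fintype.card_pos_iff.mpr ⟨v⟩
  obtain ⟨i, hi⟩ := (Tuple.sort (adjEig G)).surjective (Fintype.equivFin V v)
  have hle : (adjEig G ∘ Tuple.sort (adjEig G)) i ≤
      (adjEig G ∘ Tuple.sort (adjEig G)) (Fin.rev ⟨0, card_pos⟩) :=
    Tuple.monotone_sort _ (by simp only [Fin.le_def, Fin.val_rev]; lia)
  simpa only [kthEig, dif_pos card_pos, Function.comp_apply, hi, adjEig,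
    Equiv.symm_apply_apply] using hle

theorem exists_eigenvalues_eq_kthEig_zero [Nonempty V] :
    ∃ v, (adjMatrix_isHermitian G).eigenvalues v = kthEig G 0 := by
  rw [kthEig, dif_pos Fintype.card_pos]
  exact ⟨_, rfl⟩

open scoped MatrixOrder in
theorem adjMatrix_le_algebraMap_kthEig_zero :
    G.adjMatrix ℝ ≤ algebraMap ℝ (Matrix V V ℝ) (kthEig G 0) := by
  have hG := adjMatrix_isHermitian G
  refine le_algebraMap_of_spectrum_le (fun μ hμ ↦ ?_) hG
  obtain ⟨v, rfl⟩ := hG.spectrum_real_eq_range_eigenvalues ▸ hμ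
  exact eigenvalues_le_kthEig_zero G v

theorem posSemidef_kthEig_zero_smul_one_sub_adjMatrix :
    (kthEig G 0 • (1 : Matrix V V ℝ) - G.adjMatrix ℝ).PosSemidef := by
  rw [← Algebra.algebraMap_eq_smul_one, ← Matrix.le_iff]
  exact adjMatrix_le_algebraMap_kthEig_zero G

theorem dotProduct_adjMatrix_mulVec_le (x : V → ℝ) :
    x ⬝ᵥ G.adjMatrix ℝ *ᵥ x ≤ kthEig G 0 * (x ⬝ᵥ x) := by
  simpa [sub_mulVec, smul_mulVec] using
    (posSemidef_kthEig_zero_smul_one_sub_adjMatrix G).dotProduct_mulVec_nonneg x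

theorem le_kthEig_zero_of_mul_dotProduct_le {μ : ℝ} {x : V → ℝ} (hx : x ≠ 0)
    (hμ : μ * (x ⬝ᵥ x) ≤ x ⬝ᵥ G.adjMatrix ℝ *ᵥ x) : μ ≤ kthEig G 0 :=
  le_of_mul_le_mul_right (hμ.trans (dotProduct_adjMatrix_mulVec_le G x))
    (by simpa only [star_trivial] using dotProduct_star_self_pos_iff.mpr hx)

theorem adjMatrix_mulVec_eq_of_le_dotProduct {x : V → ℝ}
    (hx : kthEig G 0 * (x ⬝ᵥ x) ≤ x ⬝ᵥ G.adjMatrix ℝ *ᵥ x) :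
    G.adjMatrix ℝ *ᵥ x = kthEig G 0 • x := by
  have hzero := (posSemidef_kthEig_zero_smul_one_sub_adjMatrix G).dotProduct_mulVec_zero_iff x
  simp only [star_trivial, sub_mulVec, smul_mulVec, one_mulVec, dotProduct_sub,
    dotProduct_smul, smul_eq_mul, sub_eq_zero] at hzero
  exact (hzero.mp (le_antisymm hx (dotProduct_adjMatrix_mulVec_le G x))).symm

-- Replacing an eigenvector by its absolute value does not decrease the Rayleigh quotient.
theorem exists_nonneg_adjMatrix_mulVec_eq [Nonempty V] :
    ∃ x : V → ℝ, 0 ≤ x ∧ x ≠ 0 ∧ G.adjMatrix ℝ *ᵥ x = kthEig G 0 • x := by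
  obtain ⟨v, hv⟩ := exists_eigenvalues_eq_kthEig_zero G
  let e : V → ℝ := (adjMatrix_isHermitian G).eigenvectorBasis v
  have he : e ≠ 0 := fun h ↦
    (adjMatrix_isHermitian G).eigenvectorBasis.orthonormal.ne_zero v (PiLp.ext (congrFun h))
  have he_eig : G.adjMatrix ℝ *ᵥ e = kthEig G 0 • e :=
    hv ▸ (adjMatrix_isHermitian G).mulVec_eigenvectorBasis v
  have habs : |e| ≠ 0 := by
    simpa only [ne_eq, funext_iff, Pi.abs_apply, Pi.zero_apply, abs_eq_zero] using he
  refine ⟨|e|, abs_nonneg e, habs, adjMatrix_mulVec_eq_of_le_dotProduct G ?_⟩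
  calc kthEig G 0 * (|e| ⬝ᵥ |e|) = e ⬝ᵥ G.adjMatrix ℝ *ᵥ e := by
        rw [he_eig, dotProduct_smul, smul_eq_mul]
        simp only [dotProduct, Pi.abs_apply, abs_mul_abs_self]
    _ ≤ |e| ⬝ᵥ G.adjMatrix ℝ *ᵥ |e| := by
        simp only [SimpleGraph.dotProduct_mulVec_adjMatrix, Pi.abs_apply]
        gcongr with i _ j _
        split_ifs
        · exact (le_abs_self _).trans_eq (abs_mul _ _)
        · rfl

end LargestEigenvalue

theorem kthEig_zero_le_of_iso {V W : Type*} [Fintype V] [DecidableEq V] [Nonempty V] [Fintype W]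
    [DecidableEq W] {G : SimpleGraph V} [DecidableRel G.Adj] {H : SimpleGraph W}
    [DecidableRel H.Adj] (f : G ≃g H) : kthEig G 0 ≤ kthEig H 0 := by
  obtain ⟨x, -, hx0, hx⟩ := exists_nonneg_adjMatrix_mulVec_eq G
  let e : V ≃ W := f
  let y : W → ℝ := x ∘ e.symm
  have hxy : y ∘ e = x := by
    simp only [y, Function.comp_assoc, Equiv.symm_comp_self, Function.comp_id]
  have hy0 : y ≠ 0 := fun h ↦ hx0 (by rw [← hxy, h]; rfl)
  have hy : H.adjMatrix ℝ *ᵥ y = kthEig G 0 • y := by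
    rw [← f.reindex_adjMatrix ℝ, reindex_apply, submatrix_mulVec_equiv, Equiv.symm_symm, hxy, hx]
    rfl
  refine le_kthEig_zero_of_mul_dotProduct_le H hy0 ?_
  rw [hy, dotProduct_smul, smul_eq_mul]

theorem kthEig_zero_eq_of_iso {V W : Type*} [Fintype V] [DecidableEq V] [Nonempty V] [Fintype W]
    [DecidableEq W] {G : SimpleGraph V} [DecidableRel G.Adj] {H : SimpleGraph W}
    [DecidableRel H.Adj] (f : G ≃g H) : kthEig G 0 = kthEig H 0 :=
  have : Nonempty W := f.toEquiv.nonempty_congr.mp inferInstance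
  le_antisymm (kthEig_zero_le_of_iso f) (kthEig_zero_le_of_iso f.symm)

section NonnegEigenvector

variable {V : Type*} [Fintype V] {G : SimpleGraph V} [DecidableRel G.Adj] {x : V → ℝ} {ρ : ℝ}

-- The zero set of a nonnegative eigenvector is closed under adjacency.
theorem pos_of_adjMatrix_mulVec_eq (hG : G.Connected) (hx0 : 0 ≤ x) (hx : x ≠ 0)
    (hρ : G.adjMatrix ℝ *ᵥ x = ρ • x) (v : V) : 0 < x v := by
  have eq_zero_of_adj {u v : V} (huv : G.Adj u v) (hu : x u = 0) : x v = 0 := by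
    have hsum : ∑ v ∈ G.neighborFinset u, x v = 0 := by
      rw [← SimpleGraph.adjMatrix_mulVec_apply, hρ, Pi.smul_apply, hu, smul_zero]
    exact (sum_eq_zero_iff_of_nonneg fun v _ ↦ hx0 v).mp hsum v
      ((G.mem_neighborFinset u v).mpr huv)
  refine (hx0 v).lt_of_ne' fun hv ↦ hx (funext fun u ↦ ?_)
  obtain ⟨walk⟩ := hG.preconnected v u
  induction walk with
  | nil => exact hv
  | cons huv _ ih => exact ih (eq_zero_of_adj huv hv)

theorem sq_le_sum_degree_neighborFinset {u : V} (hu : 0 < x u) (hmax : ∀ v, x v ≤ x u)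
    (hρ : G.adjMatrix ℝ *ᵥ x = ρ • x) : ρ ^ 2 ≤ ∑ v ∈ G.neighborFinset u, (G.degree v : ℝ) := by
  have hsum (v : V) : ∑ z ∈ G.neighborFinset v, x z = ρ * x v := by
    rw [← SimpleGraph.adjMatrix_mulVec_apply, hρ, Pi.smul_apply, smul_eq_mul]
  refine le_of_mul_le_mul_right ?_ hu
  calc ρ ^ 2 * x u = ∑ v ∈ G.neighborFinset u, ∑ z ∈ G.neighborFinset v, x z := by
        simp_rw [hsum, ← mul_sum, hsum]
        ring
    _ ≤ ∑ v ∈ G.neighborFinset u, ∑ _z ∈ G.neighborFinset v, x u := by gcongr; exact hmax _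
    _ = (∑ v ∈ G.neighborFinset u, (G.degree v : ℝ)) * x u := by
        simp only [sum_const, SimpleGraph.card_neighborFinset_eq_degree, nsmul_eq_mul, sum_mul]

theorem neighborFinset_eq_of_subset {H : SimpleGraph V} [DecidableRel H.Adj] (hx : ∀ v, 0 < x v)
    {v : V} (hsub : G.neighborFinset v ⊆ H.neighborFinset v)
    (hle : (H.adjMatrix ℝ *ᵥ x) v ≤ (G.adjMatrix ℝ *ᵥ x) v) :
    G.neighborFinset v = H.neighborFinset v := by
  simp only [SimpleGraph.adjMatrix_mulVec_apply] at hle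
  by_contra hne
  obtain ⟨u, huH, huG⟩ := exists_of_ssubset (hsub.ssubset_of_ne hne)
  exact hle.not_gt (sum_lt_sum_of_subset hsub huH huG (hx u) fun z _ _ ↦ (hx z).le)

end NonnegEigenvector

section SubdividedCompleteBipartite

variable {s t : ℕ}

/-- The vector on the vertices of `SKab (s + 1) (t + 1)` that takes the values `p` and `q` at the
ends of the subdivided edge, `w` at the subdividing vertex, and `α` and `β` at the remaining
vertices of the first and of the second part. These vectors are the ones constant on the cells of
the equitable partition of the graph into five cells. -/
def cellVector (s t : ℕ) (p q w α β : ℝ) : Fin (s + 1) ⊕ Fin (t + 1) ⊕ Unit → ℝ :=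
  Sum.elim (Fin.cons p fun _ ↦ α) (Sum.elim (Fin.cons q fun _ ↦ β) fun _ ↦ w)

theorem SKab_adjMatrix_mulVec (x : Fin (s + 1) ⊕ Fin (t + 1) ⊕ Unit → ℝ) :
    (SKab (s + 1) (t + 1)).adjMatrix ℝ *ᵥ x =
      cellVector s t (x (.inr (.inr ())) + ∑ j : Fin t, x (.inr (.inl j.succ)))
        (x (.inr (.inr ())) + ∑ i : Fin s, x (.inl i.succ))
        (x (.inl 0) + x (.inr (.inl 0)))
        (x (.inr (.inl 0)) + ∑ j : Fin t, x (.inr (.inl j.succ)))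
        (x (.inl 0) + ∑ i : Fin s, x (.inl i.succ)) := by
  funext v
  simp only [mulVec, dotProduct, SimpleGraph.adjMatrix_apply, Fintype.sum_sum_type,
    Fin.sum_univ_succ, univ_unique, sum_singleton, ite_mul, one_mul, zero_mul]
  rcases v with i | j | _
  · cases i using Fin.cases <;> simp [cellVector, SKab, add_comm]
  · cases j using Fin.cases <;> simp [cellVector, SKab, add_comm]
  · simp [cellVector, SKab]

theorem cellVector_dotProduct (p q w α β p' q' w' α' β' : ℝ) :
    cellVector s t p q w α β ⬝ᵥ cellVector s t p' q' w' α' β' =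
      p * p' + q * q' + w * w' + s * (α * α') + t * (β * β') := by
  simp [cellVector, dotProduct, Fin.sum_univ_succ]
  ring

theorem cellVector_rayleigh_le (s t : ℕ) (p q w α β : ℝ) :
    2 * (w * (p + q) + p * (t * β) + q * (s * α) + s * α * (t * β)) ≤
      kthEig (SKab (s + 1) (t + 1)) 0 * (p ^ 2 + q ^ 2 + w ^ 2 + s * α ^ 2 + t * β ^ 2) := by
  have h := dotProduct_adjMatrix_mulVec_le (SKab (s + 1) (t + 1)) (cellVector s t p q w α β)
  simp only [SKab_adjMatrix_mulVec, cellVector_dotProduct] at h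
  simp only [cellVector, Sum.elim_inl, Sum.elim_inr, Fin.cons_zero, Fin.cons_succ, sum_const,
    card_univ, Fintype.card_fin, nsmul_eq_mul] at h
  linarith

theorem SKab_kthEig_zero_pos (s t : ℕ) : 0 < kthEig (SKab (s + 1) (t + 1)) 0 := by
  have h := cellVector_rayleigh_le s t 1 1 1 0 0
  norm_num at h
  linarith

theorem mul_sub_two_lt_sq_kthEig (s t : ℕ) :
    ((s : ℝ) + 1) * (t + 1) - 2 < kthEig (SKab (s + 1) (t + 1)) 0 ^ 2 := by
  set ρ := kthEig (SKab (s + 1) (t + 1)) 0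
  have hρ : 0 < ρ := SKab_kthEig_zero_pos s t
  have h := cellVector_rayleigh_le s t ρ s 1 ρ (s + 1)
  have hmul : ρ * (1 + s ^ 2 + t * (s + 1) ^ 2) ≤ ρ * (ρ ^ 2 * (s + 1)) := by linarith
  have hle : 1 + s ^ 2 + t * (s + 1) ^ 2 ≤ ρ ^ 2 * (s + 1) := le_of_mul_le_mul_left hmul hρ
  refine lt_of_mul_lt_mul_right ?_ (by positivity : (0 : ℝ) ≤ s + 1)
  linarith

theorem SKab_connected (s t : ℕ) : (SKab (s + 1) (t + 1)).Connected := by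
  rw [SimpleGraph.connected_iff_exists_forall_reachable]
  have hwp : (SKab (s + 1) (t + 1)).Adj (.inr (.inr ())) (.inl 0) := by simp [SKab]
  have hwq : (SKab (s + 1) (t + 1)).Adj (.inr (.inr ())) (.inr (.inl 0)) := by simp [SKab]
  refine ⟨.inr (.inr ()), ?_⟩
  rintro (i | j | _)
  · cases i using Fin.cases with
    | zero => exact hwp.reachable
    | succ i => exact hwq.reachable.trans (SimpleGraph.Adj.reachable (by simp [SKab]))
  · cases j using Fin.cases with
    | zero => exact hwq.reachable
    | succ j => exact hwp.reachable.trans (SimpleGraph.Adj.reachable (by simp [SKab]))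
  · rfl

/-- The characteristic polynomial, at `ρ`, of the quotient of `SKab (s + 1) (t + 1)` by its
equitable partition into five cells. -/
def quotientCharpoly (s t ρ : ℝ) : ℝ :=
  ρ ^ 3 * (ρ ^ 2 - 2) - (s + t) * (ρ * (ρ ^ 2 - 1)) - s * t * ((ρ - 1) ^ 2 * (ρ + 2))

-- The left side is the determinant left after eliminating the ends of the subdivided edge and the
-- subdividing vertex from the eigenvalue equations.
theorem det_eq_mul_quotientCharpoly (s t ρ : ℝ) :
    (ρ ^ 2 * (ρ ^ 2 - 2) - s * (ρ ^ 2 - 1)) * (ρ ^ 2 * (ρ ^ 2 - 2) - t * (ρ ^ 2 - 1)) -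
        s * t * (1 + ρ * (ρ ^ 2 - 2)) ^ 2 =
      (ρ ^ 2 - 2) * ρ * quotientCharpoly s t ρ := by
  rw [quotientCharpoly]
  ring

theorem quotientCharpoly_nonneg (hs : s ≠ 0) (ht : t ≠ 0) {ρ : ℝ} (hρ0 : 0 < ρ) (hρ2 : 2 < ρ ^ 2)
    (hρ : kthEig (SKab (s + 1) (t + 1)) 0 ≤ ρ) : 0 ≤ quotientCharpoly s t ρ := by
  set m : ℝ := ρ ^ 2 - 2
  have hm0 : 0 < m := sub_pos.mpr hρ2
  have hst : (0 : ℝ) < s * t := by positivity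
  have hform (z : ℝ) : 0 ≤ s * (ρ ^ 2 * m - s * (ρ ^ 2 - 1)) * (z * z) +
      -2 * (s * t * (1 + ρ * m)) * z + t * (ρ ^ 2 * m - t * (ρ ^ 2 - 1)) := by
    let u : ℝ := t + s * z
    have hray := (cellVector_rayleigh_le s t (u + m * t) (u + m * (s * z)) (ρ * u)
      (ρ * m * z) (ρ * m)).trans (mul_le_mul_of_nonneg_right hρ (by positivity))
    refine nonneg_of_mul_nonneg_right ?_ (mul_pos hρ0 hm0)
    convert sub_nonneg.mpr hray using 1
    ring
  have hdiscrim := discrim_le_zero hform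
  have hdet := det_eq_mul_quotientCharpoly s t ρ
  rw [discrim] at hdiscrim
  refine nonneg_of_mul_nonneg_right ?_ (mul_pos hm0 hρ0)
  rw [← hdet]
  refine nonneg_of_mul_nonneg_right ?_ hst
  linarith

-- `S` and `R` are the sums of a positive eigenvector over the two large cells.
theorem exists_quotient_eigenvector (s t : ℕ) :
    ∃ p q w S R : ℝ, 0 < w ∧
      w + R = kthEig (SKab (s + 1) (t + 1)) 0 * p ∧
      w + S = kthEig (SKab (s + 1) (t + 1)) 0 * q ∧
      p + q = kthEig (SKab (s + 1) (t + 1)) 0 * w ∧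
      s * (q + R) = kthEig (SKab (s + 1) (t + 1)) 0 * S ∧
      t * (p + S) = kthEig (SKab (s + 1) (t + 1)) 0 * R := by
  obtain ⟨x, hx0, hx, hρ⟩ := exists_nonneg_adjMatrix_mulVec_eq (SKab (s + 1) (t + 1))
  have hw_pos := pos_of_adjMatrix_mulVec_eq (SKab_connected s t) hx0 hx hρ (.inr (.inr ()))
  rw [SKab_adjMatrix_mulVec] at hρ
  refine ⟨_, _, _, _, _, hw_pos, congrFun hρ (.inl 0), congrFun hρ (.inr (.inl 0)),
    congrFun hρ (.inr (.inr ())), ?_, ?_⟩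
  · calc _ = ∑ _i : Fin s, (x (.inr (.inl 0)) + ∑ j : Fin t, x (.inr (.inl j.succ))) := by
          rw [Fin.sum_const, nsmul_eq_mul]
      _ = _ := (sum_congr rfl fun i _ ↦ congrFun hρ (.inl i.succ)).trans (mul_sum ..).symm
  · calc _ = ∑ _j : Fin t, (x (.inl 0) + ∑ i : Fin s, x (.inl i.succ)) := by
          rw [Fin.sum_const, nsmul_eq_mul]
      _ = _ := (sum_congr rfl fun j _ ↦ congrFun hρ (.inr (.inl j.succ))).trans (mul_sum ..).symm

theorem quotientCharpoly_kthEig_zero (hρ2 : 2 < kthEig (SKab (s + 1) (t + 1)) 0 ^ 2) :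
    quotientCharpoly s t (kthEig (SKab (s + 1) (t + 1)) 0) = 0 := by
  obtain ⟨p, q, w, S, R, hw_pos, hp, hq, hw, hS, hR⟩ := exists_quotient_eigenvector s t
  have hρ_pos := SKab_kthEig_zero_pos s t
  set ρ := kthEig (SKab (s + 1) (t + 1)) 0
  have hw' : (ρ ^ 2 - 2) * w = R + S := by linear_combination -hp - hq - ρ * hw
  have hS' : (ρ ^ 2 * (ρ ^ 2 - 2) - s * (ρ ^ 2 - 1)) * S = s * (1 + ρ * (ρ ^ 2 - 2)) * R := by
    linear_combination s * hw' - ρ * (ρ ^ 2 - 2) * hS - (ρ ^ 2 - 2) * s * hq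
  have hR' : (ρ ^ 2 * (ρ ^ 2 - 2) - t * (ρ ^ 2 - 1)) * R = t * (1 + ρ * (ρ ^ 2 - 2)) * S := by
    linear_combination t * hw' - ρ * (ρ ^ 2 - 2) * hR - (ρ ^ 2 - 2) * t * hp
  have hdet : (ρ ^ 2 - 2) * ρ * quotientCharpoly s t ρ * (R + S) = 0 := by
    rw [← det_eq_mul_quotientCharpoly]
    linear_combination (ρ ^ 2 * (ρ ^ 2 - 2) - s * (ρ ^ 2 - 1)) * hR' +
      t * (1 + ρ * (ρ ^ 2 - 2)) * hS' + (ρ ^ 2 * (ρ ^ 2 - 2) - t * (ρ ^ 2 - 1)) * hS' +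
      s * (1 + ρ * (ρ ^ 2 - 2)) * hR'
  have hm : ρ ^ 2 - 2 ≠ 0 := (sub_pos.mpr hρ2).ne'
  rw [← hw'] at hdet
  simpa [hm, hw_pos.ne', hρ_pos.ne'] using hdet

theorem kthEig_zero_SKab_lt {a b : ℕ} (ha : a ≠ 0) (hb : b ≠ 0) (hsum : s + t = a + b)
    (hlt : s * t < a * b) :
    kthEig (SKab (s + 1) (t + 1)) 0 < kthEig (SKab (a + 1) (b + 1)) 0 := by
  by_contra! hle
  set ρ := kthEig (SKab (s + 1) (t + 1)) 0
  have hρ0 : 0 < ρ := SKab_kthEig_zero_pos s t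
  have hab : (2 : ℝ) * 2 ≤ (a + 1) * (b + 1) := by
    gcongr <;> norm_cast <;> lia
  have hρ2 : 2 < ρ ^ 2 := by
    calc (2 : ℝ) ≤ (a + 1) * (b + 1) - 2 := by linarith
      _ < kthEig (SKab (a + 1) (b + 1)) 0 ^ 2 := mul_sub_two_lt_sq_kthEig a b
      _ ≤ ρ ^ 2 := pow_le_pow_left₀ (SKab_kthEig_zero_pos a b).le hle 2
  have hnonneg := quotientCharpoly_nonneg ha hb hρ0 hρ2 hle
  have hzero := quotientCharpoly_kthEig_zero hρ2
  rify at hsum hlt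
  have hdiff : quotientCharpoly a b ρ - quotientCharpoly s t ρ =
      (s * t - a * b) * ((ρ - 1) ^ 2 * (ρ + 2)) := by
    simp only [quotientCharpoly]
    linear_combination ρ * (ρ ^ 2 - 1) * hsum
  have hρ1 : ρ - 1 ≠ 0 := by
    intro h
    norm_num [sub_eq_zero.mp h] at hρ2
  have hneg := mul_neg_of_neg_of_pos (sub_neg.mpr hlt)
    (by positivity : 0 < (ρ - 1) ^ 2 * (ρ + 2))
  linarith

end SubdividedCompleteBipartite

section NonBipartite

variable {V : Type*} {G : SimpleGraph V}

theorem exists_adj_notMem_of_isIndepSet {S : Set V} (hS : G.IsIndepSet S) (hG : ¬G.Colorable 2) :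
    ∃ u ∉ S, ∃ v ∉ S, G.Adj u v := by
  by_contra! hadj
  have hbip : G.IsBipartiteWith S Sᶜ := by
    refine ⟨disjoint_compl_right, fun u v huv ↦ ?_⟩
    by_cases hu : u ∈ S
    · exact .inl ⟨hu, fun hv ↦ hS hu hv huv.ne huv⟩
    · exact .inr ⟨hu, by_contra fun hv ↦ hadj u hu v hv huv⟩
  exact hG hbip.isBipartite

theorem exists_adj_not_adj_of_cliqueFree_three (hG : G.CliqueFree 3) (hnb : ¬G.Colorable 2)
    (u : V) : ∃ y z, G.Adj y z ∧ ¬G.Adj u y ∧ ¬G.Adj u z := by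
  obtain ⟨y, hy, z, hz, hyz⟩ :=
    exists_adj_notMem_of_isIndepSet (G.isIndepSet_neighborSet_of_triangleFree hG u) hnb
  exact ⟨y, z, hyz, hy, hz⟩

theorem five_le_card_of_cliqueFree_three [Fintype V] (hG : G.CliqueFree 3)
    (hnb : ¬G.Colorable 2) : 5 ≤ Fintype.card V := by
  classical
  have hempty : G.IsIndepSet ∅ := Set.pairwise_empty _
  obtain ⟨y, -, z, -, hyz⟩ := exists_adj_notMem_of_isIndepSet hempty hnb
  obtain ⟨a, b, hab, hya, hyb⟩ := exists_adj_not_adj_of_cliqueFree_three hG hnb y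
  obtain ⟨c, d, hcd, hzc, hzd⟩ := exists_adj_not_adj_of_cliqueFree_three hG hnb z
  by_contra! hcard
  have hcard_four : #({y, z, a, b} : Finset V) = 4 := by
    grind [hyz.ne, hab.ne, hab.symm]
  have hcover : ({y, z, a, b} : Finset V) = univ := by
    rw [← card_eq_iff_eq_univ, hcard_four]
    exact le_antisymm (hcard_four ▸ card_le_univ _) (by omega)
  have huniv (v : V) : v = y ∨ v = z ∨ v = a ∨ v = b := by
    simpa only [← hcover, mem_insert, mem_singleton] using mem_univ v
  have hza : ¬G.Adj z a := by grind [hyz.symm, hcd.ne, hcd.symm, huniv c, huniv d]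
  have hzb : ¬G.Adj z b := by grind [hyz.symm, hcd.ne, hcd.symm, huniv c, huniv d]
  have hindep : G.IsIndepSet {y, a} := by
    rw [SimpleGraph.IsIndepSet, Set.pairwise_pair]
    exact fun _ ↦ ⟨hya, fun hay ↦ hya hay.symm⟩
  obtain ⟨e, he, f, hf, hef⟩ := exists_adj_notMem_of_isIndepSet hindep hnb
  simp only [Set.mem_insert_iff, Set.mem_singleton_iff] at he hf
  grind [hef.ne, hef.symm, huniv e, huniv f]

end NonBipartite

section NearBipartite

variable {V : Type*}

/-- `A` and `B` are the parts of a bipartition of the graph `G - w`. -/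
structure IsBipartitionOff (G : SimpleGraph V) (A B : Finset V) (w : V) : Prop where
  disjoint : Disjoint A B
  mem_or_mem_iff : ∀ v, v ∈ A ∨ v ∈ B ↔ v ≠ w
  isIndepSet_left : G.IsIndepSet A
  isIndepSet_right : G.IsIndepSet B

/-- The complete bipartite graph with parts `A` and `B` in which the edge `pq` is subdivided by the
vertex `w`, for disjoint `A ∋ p` and `B ∋ q` that do not contain `w`. -/
def subdividedBiclique (A B : Finset V) (p q w : V) : SimpleGraph V :=
  SimpleGraph.fromRel fun u v ↦ (u ∈ A ∧ v ∈ B ∧ ¬(u = p ∧ v = q)) ∨ (u = w ∧ (v = p ∨ v = q))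

noncomputable instance (A B : Finset V) (p q w : V) :
    DecidableRel (subdividedBiclique A B p q w).Adj := Classical.decRel _

theorem subdividedBiclique_adj {A B : Finset V} {p q w u v : V} :
    (subdividedBiclique A B p q w).Adj u v ↔ u ≠ v ∧
      (((u ∈ A ∧ v ∈ B ∧ ¬(u = p ∧ v = q)) ∨ (u = w ∧ (v = p ∨ v = q))) ∨
        ((v ∈ A ∧ u ∈ B ∧ ¬(v = p ∧ u = q)) ∨ (v = w ∧ (u = p ∨ u = q)))) :=
  SimpleGraph.fromRel_adj _ u v

theorem subdividedBiclique_comm {A B : Finset V} {p q w : V} :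
    subdividedBiclique A B p q w = subdividedBiclique B A q p w := by
  ext u v
  simp only [subdividedBiclique_adj]
  tauto

theorem exists_equiv_fin_succ_apply_eq_iff {A : Finset V} {p : V} (hp : p ∈ A) {s : ℕ}
    (hA : #A = s + 1) : ∃ e : Fin (s + 1) ≃ A, ∀ i, (e i : V) = p ↔ i = 0 := by
  classical
  let e := (A.equivFinOfCardEq hA).symm.setValue 0 ⟨p, hp⟩
  refine ⟨e, fun i ↦ ?_⟩
  rw [← e.injective.eq_iff, Equiv.setValue_eq, Subtype.ext_iff]

namespace IsBipartitionOff

variable {G : SimpleGraph V} {A B : Finset V} {p q w : V}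

theorem symm (h : IsBipartitionOff G A B w) : IsBipartitionOff G B A w :=
  ⟨h.disjoint.symm, fun v ↦ or_comm.trans (h.mem_or_mem_iff v), h.isIndepSet_right,
    h.isIndepSet_left⟩

theorem notMem_left (h : IsBipartitionOff G A B w) : w ∉ A :=
  fun hw ↦ (h.mem_or_mem_iff w).mp (.inl hw) rfl

theorem notMem_right (h : IsBipartitionOff G A B w) {v : V} (hv : v ∈ A) : v ∉ B :=
  disjoint_left.mp h.disjoint hv

theorem card_add_card_add_one [Fintype V] (h : IsBipartitionOff G A B w) :
    #A + #B + 1 = Fintype.card V := by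
  classical
  have huniv : insert w (A ∪ B) = univ := by
    grind [h.mem_or_mem_iff]
  rw [← card_union_of_disjoint h.disjoint, ← card_univ, ← huniv, card_insert_of_notMem]
  exact notMem_union.mpr ⟨h.notMem_left, h.symm.notMem_left⟩

theorem exists_adj_left (h : IsBipartitionOff G A B w) (hG : ¬G.Colorable 2) :
    ∃ p ∈ A, G.Adj w p := by
  obtain ⟨u, hu, v, hv, huv⟩ := exists_adj_notMem_of_isIndepSet h.isIndepSet_right hG
  have hmem {z : V} (hz : z ∉ (B : Set V)) (hzw : z ≠ w) : z ∈ A :=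
    ((h.mem_or_mem_iff z).mpr hzw).resolve_right hz
  by_cases huw : u = w
  · exact ⟨v, hmem hv (huw ▸ huv.ne'), huw ▸ huv⟩
  by_cases hvw : v = w
  · exact ⟨u, hmem hu huw, hvw ▸ huv.symm⟩
  · exact absurd huv (h.isIndepSet_left (hmem hu huw) (hmem hv hvw) huv.ne)

theorem swap [DecidableEq V] (h : IsBipartitionOff G A B w) (hpA : p ∈ A)
    (hp : ∀ v ∈ A, G.Adj w v ↔ v = p) : IsBipartitionOff G (insert w (A.erase p)) B p := by
  have hwB := h.symm.notMem_left
  have hpB := h.notMem_right hpA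
  have hwp : w ≠ p := ((h.mem_or_mem_iff p).mp (.inl hpA)).symm
  refine ⟨?_, fun v ↦ ?_, ?_, h.isIndepSet_right⟩
  · exact disjoint_insert_left.mpr ⟨hwB, h.disjoint.mono_left (erase_subset p A)⟩
  · grind [h.mem_or_mem_iff v]
  · rw [coe_insert]
    refine Set.pairwise_insert.mpr ⟨h.isIndepSet_left.mono (by simp), fun v hv _ ↦ ?_⟩
    have hwv : ¬G.Adj w v := fun hwv ↦ ne_of_mem_erase hv ((hp v (mem_of_mem_erase hv)).mp hwv)
    exact ⟨hwv, fun hvw ↦ hwv hvw.symm⟩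

theorem isIndepSet_subdividedBiclique_right (h : IsBipartitionOff G A B w) :
    (subdividedBiclique A B p q w).IsIndepSet B := by
  have hAB : ∀ v ∈ A, v ∉ B := fun _ ↦ h.notMem_right
  intro u hu v hv _
  rw [subdividedBiclique_adj]
  grind [h.symm.notMem_left]

theorem adj_iff_subdividedBiclique_adj_of_notMem (h : IsBipartitionOff G A B w)
    (hp : ∀ v ∈ A, G.Adj w v ↔ v = p) (hqB : q ∈ B) {u v : V} (hu : u ∉ B)
    (hv : v ∉ B) : G.Adj u v ↔ (subdividedBiclique A B p q w).Adj u v := by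
  have hA : ∀ u ∈ A, ∀ v ∈ A, ¬G.Adj u v := fun u hu v hv huv ↦
    h.isIndepSet_left hu hv huv.ne huv
  obtain rfl | huv := eq_or_ne u v
  · simp only [SimpleGraph.irrefl]
  rw [subdividedBiclique_adj]
  grind [h.mem_or_mem_iff u, h.mem_or_mem_iff v, G.adj_comm u v, h.notMem_left]

theorem le_subdividedBiclique (h : IsBipartitionOff G A B w) (hG : G.CliqueFree 3)
    (hpA : p ∈ A) (hp : ∀ v ∈ A, G.Adj w v ↔ v = p) (hqB : q ∈ B)
    (hq : ∀ v ∈ B, G.Adj w v ↔ v = q) : G ≤ subdividedBiclique A B p q w := by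
  have hwp : G.Adj w p := (hp p hpA).mpr rfl
  have hwq : G.Adj w q := (hq q hqB).mpr rfl
  have hpq : ¬G.Adj p q := fun hpq ↦
    G.isIndepSet_neighborSet_of_triangleFree hG w hwp hwq hpq.ne hpq
  have hA : ∀ u ∈ A, ∀ v ∈ A, ¬G.Adj u v := fun u hu v hv huv ↦
    h.isIndepSet_left hu hv huv.ne huv
  have hB : ∀ u ∈ B, ∀ v ∈ B, ¬G.Adj u v := fun u hu v hv huv ↦
    h.isIndepSet_right hu hv huv.ne huv
  intro u v huv
  rw [subdividedBiclique_adj]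
  grind [h.mem_or_mem_iff u, h.mem_or_mem_iff v, huv.ne, huv.symm]

section NeighborFinset

variable [Fintype V]

theorem neighborFinset_subdividedBiclique_of_mem_right (h : IsBipartitionOff G A B w) (hp : p ∈ A)
    {b : V} (hb : b ∈ B) (hbq : b ≠ q) :
    (subdividedBiclique A B p q w).neighborFinset b = A := by
  have hAB : ∀ v ∈ A, v ∉ B := fun _ ↦ h.notMem_right
  ext v
  rw [SimpleGraph.mem_neighborFinset, subdividedBiclique_adj]
  grind [h.notMem_left, h.symm.notMem_left]

variable [DecidableEq V]

theorem neighborFinset_subdividedBiclique_center (h : IsBipartitionOff G A B w) (hp : p ∈ A)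
    (hq : q ∈ B) : (subdividedBiclique A B p q w).neighborFinset w = {p, q} := by
  ext v
  rw [SimpleGraph.mem_neighborFinset, subdividedBiclique_adj, mem_insert, mem_singleton]
  grind [h.notMem_left, h.symm.notMem_left]

theorem neighborFinset_subdividedBiclique_right (h : IsBipartitionOff G A B w) (hp : p ∈ A)
    (hq : q ∈ B) :
    (subdividedBiclique A B p q w).neighborFinset q = insert w (A.erase p) := by
  have hAB : ∀ v ∈ A, v ∉ B := fun _ ↦ h.notMem_right
  ext v
  rw [SimpleGraph.mem_neighborFinset, subdividedBiclique_adj, mem_insert, mem_erase]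
  grind [h.notMem_left, h.symm.notMem_left]

end NeighborFinset

theorem nonempty_iso_SKab (h : IsBipartitionOff G A B w) (hp : p ∈ A) (hq : q ∈ B)
    {s t : ℕ} (hA : #A = s + 1) (hB : #B = t + 1) :
    Nonempty (subdividedBiclique A B p q w ≃g SKab (s + 1) (t + 1)) := by
  have hwA : w ∉ A := h.notMem_left
  have hwB : w ∉ B := h.symm.notMem_left
  have hAB : ∀ v ∈ A, v ∉ B := fun _ ↦ h.notMem_right
  obtain ⟨eA, heA⟩ := exists_equiv_fin_succ_apply_eq_iff hp hA
  obtain ⟨eB, heB⟩ := exists_equiv_fin_succ_apply_eq_iff hq hB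
  have heA_inj (i i') : (eA i : V) = eA i' ↔ i = i' := by rw [← Subtype.ext_iff, eA.apply_eq_iff_eq]
  have heB_inj (j j') : (eB j : V) = eB j' ↔ j = j' := by rw [← Subtype.ext_iff, eB.apply_eq_iff_eq]
  let f : Fin (s + 1) ⊕ Fin (t + 1) ⊕ Unit → V :=
    Sum.elim (fun i ↦ eA i) (Sum.elim (fun j ↦ eB j) fun _ ↦ w)
  have hf : Function.Bijective f := by
    constructor
    · rintro (i | j | _) (i' | j' | _) heq
      all_goals simp only [f, Sum.elim_inl, Sum.elim_inr] at heq
      all_goals grind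
    · intro v
      by_cases hv : v = w
      · exact ⟨.inr (.inr ()), hv.symm⟩
      rcases (h.mem_or_mem_iff v).mpr hv with hvA | hvB
      · exact ⟨.inl (eA.symm ⟨v, hvA⟩), by simp [f]⟩
      · exact ⟨.inr (.inl (eB.symm ⟨v, hvB⟩)), by simp [f]⟩
  refine ⟨SimpleGraph.Iso.symm ⟨Equiv.ofBijective f hf, ?_⟩⟩
  rintro (i | j | _) (i' | j' | _)
  all_goals simp [f, subdividedBiclique_adj, SKab]
  all_goals grind

theorem connected_subdividedBiclique (h : IsBipartitionOff G A B w) (hpA : p ∈ A) (hqB : q ∈ B) :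
    (subdividedBiclique A B p q w).Connected := by
  obtain ⟨s, hs⟩ := Nat.exists_eq_succ_of_ne_zero (card_ne_zero_of_mem hpA)
  obtain ⟨t, ht⟩ := Nat.exists_eq_succ_of_ne_zero (card_ne_zero_of_mem hqB)
  obtain ⟨f⟩ := h.nonempty_iso_SKab hpA hqB hs ht
  exact f.connected_iff.mpr (SKab_connected s t)

end IsBipartitionOff

end NearBipartite

section Rotation

variable {V : Type*} [Fintype V] {G H : SimpleGraph V} [DecidableRel G.Adj]
  [DecidableRel H.Adj] {A B : Finset V} {x : V → ℝ}

theorem dotProduct_adjMatrix_mulVec_of_isIndepSet [DecidableEq V] (hB : G.IsIndepSet B)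
    (x : V → ℝ) :
    x ⬝ᵥ G.adjMatrix ℝ *ᵥ x = 2 * ∑ b ∈ B, x b * (G.adjMatrix ℝ *ᵥ x) b +
      ∑ u ∈ Bᶜ, ∑ v ∈ Bᶜ, if G.Adj u v then x u * x v else 0 := by
  have hrow (u : V) : x u * (G.adjMatrix ℝ *ᵥ x) u =
      ∑ v, if G.Adj u v then x u * x v else 0 := by
    simp only [mulVec, dotProduct, SimpleGraph.adjMatrix_apply, mul_sum, ite_mul, one_mul,
      zero_mul, mul_ite, mul_zero]
  have hBB : ∑ u ∈ B, ∑ v ∈ B, (if G.Adj u v then x u * x v else 0) = 0 :=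
    sum_eq_zero fun u hu ↦ sum_eq_zero fun v hv ↦ if_neg fun huv ↦ hB hu hv huv.ne huv
  have hcross : ∑ u ∈ Bᶜ, ∑ v ∈ B, (if G.Adj u v then x u * x v else 0) =
      ∑ u ∈ B, ∑ v ∈ Bᶜ, if G.Adj u v then x u * x v else 0 := by
    rw [sum_comm]
    simp only [G.adj_comm, mul_comm]
  simp only [dotProduct, hrow, ← sum_add_sum_compl B, sum_add_distrib, hBB, hcross]
  ring

theorem dotProduct_adjMatrix_mulVec_le_of_isIndepSet (hGB : G.IsIndepSet B)
    (hHB : H.IsIndepSet B) (hGH : ∀ u ∉ B, ∀ v ∉ B, G.Adj u v ↔ H.Adj u v) (hx : 0 ≤ x)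
    (hle : ∀ b ∈ B, (G.adjMatrix ℝ *ᵥ x) b ≤ (H.adjMatrix ℝ *ᵥ x) b) :
    x ⬝ᵥ G.adjMatrix ℝ *ᵥ x ≤ x ⬝ᵥ H.adjMatrix ℝ *ᵥ x := by
  classical
  rw [dotProduct_adjMatrix_mulVec_of_isIndepSet hGB, dotProduct_adjMatrix_mulVec_of_isIndepSet hHB]
  gcongr 2 * ?_ + ?_
  · exact sum_le_sum fun b hb ↦ mul_le_mul_of_nonneg_left (hle b hb) (hx b)
  · refine (sum_congr rfl fun u hu ↦ sum_congr rfl fun v hv ↦ ?_).le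
    simp only [hGH u (mem_compl.mp hu) v (mem_compl.mp hv)]

namespace IsBipartitionOff

variable {p q w : V}

theorem neighborFinset_subset (h : IsBipartitionOff G A B w) {b : V} (hb : b ∈ B)
    (hwb : ¬G.Adj w b) : G.neighborFinset b ⊆ A := by
  intro v hv
  have hbv : G.Adj b v := (G.mem_neighborFinset b v).mp hv
  have hvB : v ∉ B := fun hvB ↦ h.isIndepSet_right hb hvB hbv.ne hbv
  have hvw : v ≠ w := fun hvw ↦ hwb (hvw ▸ hbv.symm)
  exact ((h.mem_or_mem_iff v).mpr hvw).resolve_right hvB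

theorem neighborFinset_subset_insert_erase [DecidableEq V] (h : IsBipartitionOff G A B w)
    (hG : G.CliqueFree 3) (hwp : G.Adj w p) {b : V} (hb : b ∈ B) (hwb : G.Adj w b) :
    G.neighborFinset b ⊆ insert w (A.erase p) := by
  intro v hv
  have hbv : G.Adj b v := (G.mem_neighborFinset b v).mp hv
  have hvB : v ∉ B := fun hvB ↦ h.isIndepSet_right hb hvB hbv.ne hbv
  have hvp : v ≠ p := by
    rintro rfl
    exact G.isIndepSet_neighborSet_of_triangleFree hG w hwb hwp hbv.ne hbv
  grind [h.mem_or_mem_iff v]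

-- Inserting `w` and erasing `p` does not increase the sum of `x`, and a vertex of `B` is not
-- adjacent to both `w` and `p`.
theorem adjMatrix_mulVec_le (h : IsBipartitionOff G A B w) (hG : G.CliqueFree 3)
    (hpA : p ∈ A) (hp : G.Adj w p) (hqB : q ∈ B) (hq : G.Adj w q)
    (hx : 0 ≤ x) (hwp : x w ≤ x p) {b : V} (hb : b ∈ B) :
    (G.adjMatrix ℝ *ᵥ x) b ≤ ((subdividedBiclique A B p q w).adjMatrix ℝ *ᵥ x) b := by
  classical
  rw [SimpleGraph.adjMatrix_mulVec_apply, SimpleGraph.adjMatrix_mulVec_apply]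
  have hsum_le {S T : Finset V} (hST : S ⊆ T) : ∑ v ∈ S, x v ≤ ∑ v ∈ T, x v :=
    sum_le_sum_of_subset_of_nonneg hST fun v _ _ ↦ hx v
  by_cases hbq : b = q
  · rw [hbq, h.neighborFinset_subdividedBiclique_right hpA hqB]
    exact hsum_le (h.neighborFinset_subset_insert_erase hG hp hqB hq)
  rw [h.neighborFinset_subdividedBiclique_of_mem_right hpA hb hbq]
  by_cases hwb : G.Adj w b
  · calc ∑ v ∈ G.neighborFinset b, x v ≤ ∑ v ∈ insert w (A.erase p), x v :=
          hsum_le (h.neighborFinset_subset_insert_erase hG hp hb hwb)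
      _ = x w + ∑ v ∈ A.erase p, x v :=
          sum_insert fun hw ↦ h.notMem_left (mem_of_mem_erase hw)
      _ ≤ x p + ∑ v ∈ A.erase p, x v := by gcongr
      _ = ∑ v ∈ A, x v := add_sum_erase A x hpA
  · exact hsum_le (h.neighborFinset_subset hb hwb)

theorem dotProduct_adjMatrix_mulVec_le (h : IsBipartitionOff G A B w) (hG : G.CliqueFree 3)
    (hpA : p ∈ A) (hp : ∀ v ∈ A, G.Adj w v ↔ v = p) (hqB : q ∈ B) (hq : G.Adj w q)
    (hx : 0 ≤ x) (hwp : x w ≤ x p) :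
    x ⬝ᵥ G.adjMatrix ℝ *ᵥ x ≤ x ⬝ᵥ (subdividedBiclique A B p q w).adjMatrix ℝ *ᵥ x :=
  dotProduct_adjMatrix_mulVec_le_of_isIndepSet h.isIndepSet_right
    (h.isIndepSet_subdividedBiclique_right)
    (fun _ hu _ hv ↦ h.adj_iff_subdividedBiclique_adj_of_notMem hp hqB hu hv) hx
    fun _ hb ↦ h.adjMatrix_mulVec_le hG hpA ((hp p hpA).mpr rfl) hqB hq hx hwp hb

variable [DecidableEq V]

theorem kthEig_zero_le_subdividedBiclique (h : IsBipartitionOff G A B w) (hG : G.CliqueFree 3)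
    (hpA : p ∈ A) (hp : ∀ v ∈ A, G.Adj w v ↔ v = p) (hqB : q ∈ B) (hq : G.Adj w q)
    (hx : 0 ≤ x) (hx0 : x ≠ 0) (hxG : G.adjMatrix ℝ *ᵥ x = kthEig G 0 • x) (hwp : x w ≤ x p) :
    kthEig G 0 ≤ kthEig (subdividedBiclique A B p q w) 0 := by
  refine le_kthEig_zero_of_mul_dotProduct_le _ hx0 ?_
  calc kthEig G 0 * (x ⬝ᵥ x) = x ⬝ᵥ G.adjMatrix ℝ *ᵥ x := by
        rw [hxG, dotProduct_smul, smul_eq_mul]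
    _ ≤ x ⬝ᵥ (subdividedBiclique A B p q w).adjMatrix ℝ *ᵥ x :=
        h.dotProduct_adjMatrix_mulVec_le hG hpA hp hqB hq hx hwp

theorem eq_subdividedBiclique (h : IsBipartitionOff G A B w) (hG : G.CliqueFree 3)
    (hpA : p ∈ A) (hp : ∀ v ∈ A, G.Adj w v ↔ v = p) (hqB : q ∈ B) (hq : G.Adj w q)
    (hx : 0 ≤ x) (hx0 : x ≠ 0) (hxG : G.adjMatrix ℝ *ᵥ x = kthEig G 0 • x) (hwp : x w ≤ x p)
    (hle : kthEig (subdividedBiclique A B p q w) 0 ≤ kthEig G 0) :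
    G = subdividedBiclique A B p q w := by
  set H := subdividedBiclique A B p q w
  have hGH : kthEig H 0 = kthEig G 0 :=
    hle.antisymm (h.kthEig_zero_le_subdividedBiclique hG hpA hp hqB hq hx hx0 hxG hwp)
  have hxH : H.adjMatrix ℝ *ᵥ x = kthEig H 0 • x := by
    refine adjMatrix_mulVec_eq_of_le_dotProduct H ?_
    calc kthEig H 0 * (x ⬝ᵥ x) = x ⬝ᵥ G.adjMatrix ℝ *ᵥ x := by
          rw [hGH, hxG, dotProduct_smul, smul_eq_mul]
      _ ≤ x ⬝ᵥ H.adjMatrix ℝ *ᵥ x := h.dotProduct_adjMatrix_mulVec_le hG hpA hp hqB hq hx hwp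
  have hpos : ∀ v, 0 < x v :=
    pos_of_adjMatrix_mulVec_eq (h.connected_subdividedBiclique hpA hqB) hx hx0 hxH
  have hmulVec : G.adjMatrix ℝ *ᵥ x = H.adjMatrix ℝ *ᵥ x := by rw [hxG, hxH, hGH]
  have hw : H.neighborFinset w = G.neighborFinset w := by
    refine neighborFinset_eq_of_subset hpos ?_ (congrFun hmulVec w).le
    rw [h.neighborFinset_subdividedBiclique_center hpA hqB]
    have hwp : G.Adj w p := (hp p hpA).mpr rfl
    simp [insert_subset_iff, hq, hwp]
  have hqB' : ∀ v ∈ B, G.Adj w v ↔ v = q := by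
    intro v hv
    rw [← SimpleGraph.mem_neighborFinset, ← hw,
      h.neighborFinset_subdividedBiclique_center hpA hqB, mem_insert, mem_singleton,
      or_iff_right fun hvp : v = p ↦ h.notMem_right hpA (hvp ▸ hv)]
  have hGleH : G ≤ H := h.le_subdividedBiclique hG hpA hp hqB hqB'
  have hsub (v : V) : G.neighborFinset v ⊆ H.neighborFinset v :=
    fun u hu ↦ (H.mem_neighborFinset v u).mpr (hGleH ((G.mem_neighborFinset v u).mp hu))
  ext u v
  rw [← SimpleGraph.mem_neighborFinset, ← SimpleGraph.mem_neighborFinset,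
    neighborFinset_eq_of_subset hpos (hsub u) (congrFun hmulVec u).ge]

end IsBipartitionOff

end Rotation

section NearBipartiteExtremal

theorem mul_le_mul_of_add_eq_of_le_add_one {s t a b : ℕ} (hst : s + t = a + b) (hab : a ≤ b)
    (hba : b ≤ a + 1) : s * t ≤ a * b := by
  zify at *
  have hsa : 0 ≤ ((s : ℤ) - a) * (s - b) := by
    rcases le_or_gt (s : ℤ) a with hs | hs
    · exact mul_nonneg_of_nonpos_of_nonpos (by omega) (by omega)
    · exact mul_nonneg (by omega) (by omega)
  linear_combination hsa + s * hst

theorem eq_and_eq_or_eq_and_eq_of_add_eq_of_mul_eq {s t a b : ℕ} (hadd : s + t = a + b)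
    (hmul : s * t = a * b) : s = a ∧ t = b ∨ s = b ∧ t = a := by
  have hsa : ((s : ℤ) - a) * (s - b) = 0 := by
    zify at hadd hmul
    linear_combination s * hadd - hmul
  rcases mul_eq_zero.mp hsa with hs | hs <;> omega

namespace IsBipartitionOff

variable {V : Type*} [Fintype V] [DecidableEq V] {G : SimpleGraph V} [DecidableRel G.Adj]
  {A B : Finset V} {p q w : V} {a b : ℕ}

theorem nonempty_iso_SKab_of_apply_le (h : IsBipartitionOff G A B w) (hG : G.CliqueFree 3)
    (hpA : p ∈ A) (hp : ∀ v ∈ A, G.Adj w v ↔ v = p) (hqB : q ∈ B) (hq : G.Adj w q) {x : V → ℝ}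
    (hx : 0 ≤ x) (hx0 : x ≠ 0) (hxG : G.adjMatrix ℝ *ᵥ x = kthEig G 0 • x) (hwp : x w ≤ x p)
    (ha : a ≠ 0) (hab : a ≤ b) (hba : b ≤ a + 1) (hcard : Fintype.card V = a + b + 3)
    (hle : kthEig (SKab (a + 1) (b + 1)) 0 ≤ kthEig G 0) :
    Nonempty (G ≃g SKab (a + 1) (b + 1)) := by
  have : Nonempty V := ⟨w⟩
  obtain ⟨s, hs⟩ := Nat.exists_eq_succ_of_ne_zero (card_ne_zero_of_mem hpA)
  obtain ⟨t, ht⟩ := Nat.exists_eq_succ_of_ne_zero (card_ne_zero_of_mem hqB)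
  obtain ⟨f⟩ := h.nonempty_iso_SKab hpA hqB hs ht
  have hst : s + t = a + b := by
    have := h.card_add_card_add_one
    omega
  have hle_st : kthEig (SKab (a + 1) (b + 1)) 0 ≤ kthEig (SKab (s + 1) (t + 1)) 0 :=
    calc kthEig (SKab (a + 1) (b + 1)) 0 ≤ kthEig G 0 := hle
      _ ≤ kthEig (subdividedBiclique A B p q w) 0 :=
          h.kthEig_zero_le_subdividedBiclique hG hpA hp hqB hq hx hx0 hxG hwp
      _ = kthEig (SKab (s + 1) (t + 1)) 0 := kthEig_zero_eq_of_iso f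
  have hmul : s * t = a * b :=
    (mul_le_mul_of_add_eq_of_le_add_one hst hab hba).antisymm <| not_lt.mp fun hlt ↦
      (kthEig_zero_SKab_lt ha (by omega) hst hlt).not_ge hle_st
  have hiso : Nonempty (subdividedBiclique A B p q w ≃g SKab (a + 1) (b + 1)) := by
    rcases eq_and_eq_or_eq_and_eq_of_add_eq_of_mul_eq hst hmul with ⟨rfl, rfl⟩ | ⟨rfl, rfl⟩
    · exact ⟨f⟩
    · rw [subdividedBiclique_comm]
      exact h.symm.nonempty_iso_SKab hqB hpA ht hs
  obtain ⟨g⟩ := hiso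
  have hHG : kthEig (subdividedBiclique A B p q w) 0 ≤ kthEig G 0 :=
    (kthEig_zero_eq_of_iso g).trans_le hle
  have hGeq := h.eq_subdividedBiclique hG hpA hp hqB hq hx hx0 hxG hwp hHG
  exact hGeq ▸ ⟨g⟩

-- The two cases are symmetric: `w` and its only neighbour `p` in `A` can exchange roles.
theorem nonempty_iso_SKab_of_card_filter_adj_le_one (h : IsBipartitionOff G A B w)
    (hG : G.CliqueFree 3) (hnb : ¬G.Colorable 2) (hw : #{v ∈ A | G.Adj w v} ≤ 1)
    (ha : a ≠ 0) (hab : a ≤ b) (hba : b ≤ a + 1) (hcard : Fintype.card V = a + b + 3)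
    (hle : kthEig (SKab (a + 1) (b + 1)) 0 ≤ kthEig G 0) :
    Nonempty (G ≃g SKab (a + 1) (b + 1)) := by
  have : Nonempty V := ⟨w⟩
  obtain ⟨x, hx, hx0, hxG⟩ := exists_nonneg_adjMatrix_mulVec_eq G
  obtain ⟨p, hpA, hwp⟩ := h.exists_adj_left hnb
  have hp : ∀ v ∈ A, G.Adj w v ↔ v = p := fun v hv ↦
    ⟨fun hwv ↦ card_le_one.mp hw v (mem_filter.mpr ⟨hv, hwv⟩) p (mem_filter.mpr ⟨hpA, hwp⟩),
      fun hvp ↦ hvp ▸ hwp⟩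
  rcases le_total (x w) (x p) with hxwp | hxpw
  · obtain ⟨q, hqB, hwq⟩ := h.symm.exists_adj_left hnb
    exact h.nonempty_iso_SKab_of_apply_le hG hpA hp hqB hwq hx hx0 hxG hxwp ha hab hba hcard hle
  · have h' := h.swap hpA hp
    obtain ⟨q, hqB, hpq⟩ := h'.symm.exists_adj_left hnb
    have hw' : ∀ v ∈ insert w (A.erase p), G.Adj p v ↔ v = w := by
      intro v hv
      rcases mem_insert.mp hv with rfl | hv
      · exact iff_of_true hwp.symm rfl
      have hvA := mem_of_mem_erase hv
      exact iff_of_false (fun hpv ↦ h.isIndepSet_left hpA hvA hpv.ne hpv)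
        fun hvw ↦ h.notMem_left (hvw ▸ hvA)
    exact h'.nonempty_iso_SKab_of_apply_le hG (mem_insert_self _ _) hw' hqB hpq hx hx0 hxG hxpw
      ha hab hba hcard hle

end IsBipartitionOff

end NearBipartiteExtremal

section TriangleFreeStructure

variable {V : Type*} {G : SimpleGraph V} {A B : Finset V}

theorem exists_isIndepSet_erase_of_not_disjoint [DecidableEq V] (hG : G.CliqueFree 3)
    (hne : B.Nonempty)
    (hB : ∀ c ∈ B, ∀ d ∈ B, ∀ e ∈ B, ∀ f ∈ B, G.Adj c d → G.Adj e f →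
      ¬Disjoint ({c, d} : Finset V) {e, f}) :
    ∃ y ∈ B, G.IsIndepSet (B.erase y) := by
  by_contra! hindep
  have exists_edge_avoiding {y : V} (hy : y ∈ B) :
      ∃ c ∈ B, ∃ d ∈ B, G.Adj c d ∧ c ≠ y ∧ d ≠ y := by
    have hnot := hindep y hy
    simp only [SimpleGraph.IsIndepSet, Set.Pairwise, not_forall, not_not, mem_coe] at hnot
    obtain ⟨c, hc, d, hd, -, hcd⟩ := hnot
    exact ⟨c, mem_of_mem_erase hc, d, mem_of_mem_erase hd, hcd, ne_of_mem_erase hc,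
      ne_of_mem_erase hd⟩
  have exists_adj_ne {y z : V} (hy : y ∈ B) (hz : z ∈ B) (hyz : G.Adj y z) :
      ∃ t ∈ B, G.Adj z t ∧ t ≠ y := by
    obtain ⟨c, hc, d, hd, hcd, hcy, hdy⟩ := exists_edge_avoiding hy
    have hmeet := hB c hc d hd y hy z hz hcd hyz
    have hz_mem : c = z ∨ d = z := by
      simp only [disjoint_insert_left, disjoint_singleton_left, mem_insert, mem_singleton] at hmeet
      tauto
    rcases hz_mem with rfl | rfl
    · exact ⟨d, hd, hcd, hdy⟩
    · exact ⟨c, hc, hcd.symm, hcy⟩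
  obtain ⟨v, hv⟩ := hne
  obtain ⟨y, hy, z, hz, hyz, -, -⟩ := exists_edge_avoiding hv
  obtain ⟨s, hs, hzs, hsy⟩ := exists_adj_ne hy hz hyz
  obtain ⟨t, ht, hyt, htz⟩ := exists_adj_ne hz hy hyz.symm
  have hst : s = t := by
    by_contra hst
    exact hB y hy t ht z hz s hs hyt hzs (by simp [hyz.ne', hsy, htz.symm, hst])
  subst hst
  exact G.isIndepSet_neighborSet_of_triangleFree hG y hyz hyt hzs.ne hzs

theorem isBipartitionOff_of_isIndepSet_erase_compl [Fintype V] [DecidableEq V] {y : V}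
    (hA : G.IsIndepSet A) (hyA : y ∉ A) (hy : G.IsIndepSet (Aᶜ.erase y)) :
    IsBipartitionOff G A (Aᶜ.erase y) y where
  disjoint := disjoint_compl_right.mono_right (erase_subset y Aᶜ)
  mem_or_mem_iff v := by grind [mem_compl]
  isIndepSet_left := hA
  isIndepSet_right := hy

variable [Fintype V] [DecidableRel G.Adj] {v : V}

theorem degree_add_two_le_card_of_disjoint [DecidableEq V] (hG : G.CliqueFree 3)
    (hv : G.neighborFinset v ⊆ B) {c d e f : V} (hc : c ∈ B) (hd : d ∈ B) (he : e ∈ B)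
    (hf : f ∈ B) (hcd : G.Adj c d) (hef : G.Adj e f)
    (hdisj : Disjoint ({c, d} : Finset V) {e, f}) : G.degree v + 2 ≤ #B := by
  have exists_notMem {c d : V} (hcd : G.Adj c d) :
      ∃ z ∈ ({c, d} : Finset V), z ∉ G.neighborFinset v := by
    by_contra! hmem
    simp only [mem_insert, mem_singleton, forall_eq_or_imp, forall_eq,
      SimpleGraph.mem_neighborFinset] at hmem
    exact G.isIndepSet_neighborSet_of_triangleFree hG v hmem.1 hmem.2 hcd.ne hcd
  obtain ⟨y, hy, hvy⟩ := exists_notMem hcd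
  obtain ⟨z, hz, hvz⟩ := exists_notMem hef
  have hyz : y ≠ z := fun hyz ↦ disjoint_left.mp hdisj hy (hyz ▸ hz)
  have hsub : {y, z} ⊆ B \ G.neighborFinset v := by
    grind
  calc G.degree v + 2 = #(G.neighborFinset v) + #({y, z} : Finset V) := by
        rw [G.card_neighborFinset_eq_degree, card_pair hyz]
    _ ≤ #(G.neighborFinset v) + #(B \ G.neighborFinset v) := by gcongr
    _ = #B := by rw [add_comm, card_sdiff_add_card_eq_card hv]

-- A vertex of `A` is not adjacent to `y`, or it is adjacent to none of the neighbours of `y`.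
theorem degree_add_one_add_ite_adj_le_card {y : V} (hG : G.CliqueFree 3) (hy : y ∈ B)
    (hyB : 2 ≤ #{z ∈ B | G.Adj y z}) (hv : G.neighborFinset v ⊆ B) :
    G.degree v + (1 + if G.Adj y v then 1 else 0) ≤ #B := by
  classical
  rw [← G.card_neighborFinset_eq_degree, ← card_sdiff_add_card_eq_card hv, add_comm]
  gcongr
  split_ifs with hyv
  · refine hyB.trans (card_le_card fun z hz ↦ ?_)
    obtain ⟨hzB, hyz⟩ := mem_filter.mp hz
    refine mem_sdiff.mpr ⟨hzB, fun hvz ↦ ?_⟩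
    have hvz : G.Adj v z := (G.mem_neighborFinset v z).mp hvz
    exact G.isIndepSet_neighborSet_of_triangleFree hG y hyv hyz hvz.ne hvz
  · refine card_pos.mpr ⟨y, mem_sdiff.mpr ⟨hy, fun hvy ↦ hyv ?_⟩⟩
    exact ((G.mem_neighborFinset v y).mp hvy).symm

theorem sum_degree_add_two_le_mul_card_sub_one {y : V} (hG : G.CliqueFree 3) (hy : y ∈ B)
    (hyA : 2 ≤ #{z ∈ A | G.Adj y z}) (hyB : 2 ≤ #{z ∈ B | G.Adj y z})
    (hAB : ∀ v ∈ A, G.neighborFinset v ⊆ B) :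
    ∑ v ∈ A, G.degree v + 2 ≤ #A * (#B - 1) := by
  calc ∑ v ∈ A, G.degree v + 2 ≤ ∑ v ∈ A, G.degree v + ∑ v ∈ A, if G.Adj y v then 1 else 0 := by
        rw [← card_filter]
        gcongr
    _ = ∑ v ∈ A, (G.degree v + if G.Adj y v then 1 else 0) := sum_add_distrib.symm
    _ ≤ #A * (#B - 1) := by
        refine sum_le_card_nsmul A _ _ fun v hv ↦ ?_
        have := degree_add_one_add_ite_adj_le_card hG hy hyB (hAB v hv)
        omega

theorem not_disjoint_of_mul_lt_sum_degree [DecidableEq V] (hG : G.CliqueFree 3) {a b : ℕ}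
    (ha : a ≠ 0) (hab : a ≤ b) (hba : b ≤ a + 1) (hcard : #A + #B = a + b + 3)
    (hAB : ∀ v ∈ A, G.neighborFinset v ⊆ B)
    (hsum : (a + 1) * (b + 1) < ∑ v ∈ A, G.degree v + 2) {c d e f : V} (hc : c ∈ B)
    (hd : d ∈ B) (he : e ∈ B) (hf : f ∈ B) (hcd : G.Adj c d) (hef : G.Adj e f) :
    ¬Disjoint ({c, d} : Finset V) {e, f} := by
  intro hdisj
  have hdeg : ∀ v ∈ A, G.degree v ≤ #B - 2 := fun v hv ↦ Nat.le_sub_of_add_le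
    (degree_add_two_le_card_of_disjoint hG (hAB v hv) hc hd he hf hcd hef hdisj)
  have hB_two : 2 ≤ #B := by
    have := card_le_card (insert_subset hc (singleton_subset_iff.mpr hd))
    rwa [card_pair hcd.ne] at this
  have hle : ∑ v ∈ A, G.degree v ≤ b * (a + 1) :=
    calc ∑ v ∈ A, G.degree v ≤ #A * (#B - 2) := sum_le_card_nsmul A _ _ hdeg
      _ ≤ b * (a + 1) := mul_le_mul_of_add_eq_of_le_add_one (by omega) hba (by omega)
  nlinarith [Nat.pos_of_ne_zero ha]

theorem exists_isBipartitionOff (hG : G.CliqueFree 3) {a b : ℕ} (ha : a ≠ 0) (hab : a ≤ b)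
    (hba : b ≤ a + 1) (hcard : Fintype.card V = a + b + 3) {u : V}
    (hu : (a + 1) * (b + 1) < ∑ v ∈ G.neighborFinset u, G.degree v + 2) :
    ∃ A B w, IsBipartitionOff G A B w ∧ #{v ∈ A | G.Adj w v} ≤ 1 := by
  classical
  set A := G.neighborFinset u
  have hA : G.IsIndepSet A := by
    rw [G.coe_neighborFinset]
    exact G.isIndepSet_neighborSet_of_triangleFree hG u
  have hAc : ∀ v ∈ A, G.neighborFinset v ⊆ Aᶜ := fun v hv z hz ↦ by
    have hvz : G.Adj v z := (G.mem_neighborFinset v z).mp hz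
    exact mem_compl.mpr fun hzA ↦ hA hv hzA hvz.ne hvz
  have hAcard : #A + #Aᶜ = a + b + 3 := by rw [card_add_card_compl, hcard]
  have huA : u ∈ Aᶜ := mem_compl.mpr (G.notMem_neighborFinset_self u)
  obtain ⟨y, hy, hindep⟩ := exists_isIndepSet_erase_of_not_disjoint hG ⟨u, huA⟩
    fun c hc d hd e he f hf ↦
      not_disjoint_of_mul_lt_sum_degree hG ha hab hba hAcard hAc hu hc hd he hf
  have hbip := isBipartitionOff_of_isIndepSet_erase_compl hA (mem_compl.mp hy) hindep
  by_cases hyA : #{v ∈ A | G.Adj y v} ≤ 1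
  · exact ⟨A, Aᶜ.erase y, y, hbip, hyA⟩
  refine ⟨Aᶜ.erase y, A, y, hbip.symm, not_lt.mp fun hyAc ↦ hu.not_ge ?_⟩
  have hyAc_two : 2 ≤ #{v ∈ Aᶜ | G.Adj y v} :=
    hyAc.trans_le (card_le_card (filter_subset_filter _ (erase_subset y Aᶜ)))
  calc ∑ v ∈ A, G.degree v + 2 ≤ #A * (#Aᶜ - 1) :=
        sum_degree_add_two_le_mul_card_sub_one hG hy (not_le.mp hyA) hyAc_two hAc
    _ ≤ (a + 1) * (b + 1) := by
        have := card_pos.mpr ⟨y, hy⟩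
        exact mul_le_mul_of_add_eq_of_le_add_one (by omega) (by omega) (by omega)

end TriangleFreeStructure

section Extremal

variable {V : Type*} [Fintype V] [DecidableEq V] {G : SimpleGraph V} [DecidableRel G.Adj] {a b : ℕ}

theorem exists_mul_lt_sum_degree_neighborFinset_add_two [Nonempty V]
    (hle : kthEig (SKab (a + 1) (b + 1)) 0 ≤ kthEig G 0) :
    ∃ u, (a + 1) * (b + 1) < ∑ v ∈ G.neighborFinset u, G.degree v + 2 := by
  obtain ⟨x, hx, hx0, hxG⟩ := exists_nonneg_adjMatrix_mulVec_eq G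
  obtain ⟨u, hmax⟩ := Finite.exists_max x
  have hu : 0 < x u := by
    refine (hx u).lt_of_ne' fun hu ↦ hx0 (funext fun v ↦ ?_)
    exact le_antisymm ((hmax v).trans_eq hu) (hx v)
  refine ⟨u, ?_⟩
  have hlt : ((a : ℝ) + 1) * (b + 1) - 2 < ∑ v ∈ G.neighborFinset u, (G.degree v : ℝ) :=
    calc ((a : ℝ) + 1) * (b + 1) - 2 < kthEig (SKab (a + 1) (b + 1)) 0 ^ 2 :=
          mul_sub_two_lt_sq_kthEig a b
      _ ≤ kthEig G 0 ^ 2 := pow_le_pow_left₀ (SKab_kthEig_zero_pos a b).le hle 2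
      _ ≤ ∑ v ∈ G.neighborFinset u, (G.degree v : ℝ) :=
          sq_le_sum_degree_neighborFinset hu hmax hxG
  rw [sub_lt_iff_lt_add] at hlt
  exact_mod_cast hlt

theorem nonempty_iso_SKab_of_cliqueFree_three (hG : G.CliqueFree 3) (hnb : ¬G.Colorable 2)
    (ha : a ≠ 0) (hab : a ≤ b) (hba : b ≤ a + 1) (hcard : Fintype.card V = a + b + 3)
    (hle : kthEig (SKab (a + 1) (b + 1)) 0 ≤ kthEig G 0) :
    Nonempty (G ≃g SKab (a + 1) (b + 1)) := by
  have : Nonempty V := Fintype.card_pos_iff.mp (by omega)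
  obtain ⟨u, hu⟩ := exists_mul_lt_sum_degree_neighborFinset_add_two hle
  obtain ⟨A, B, w, hbip, hw⟩ := exists_isBipartitionOff hG ha hab hba hcard hu
  exact hbip.nonempty_iso_SKab_of_card_filter_adj_le_one hG hnb hw ha hab hba hcard hle

end Extremal

/-- If `G` is a non-bipartite graph of order `n` with
`λ₁(G) ≥ λ₁(S(K_{⌊(n-1)/2⌋, ⌈(n-1)/2⌉}))`, then `G` contains a triangle unless `G`
is isomorphic to `S(K_{⌊(n-1)/2⌋, ⌈(n-1)/2⌉})`.  (Note `⌈(n-1)/2⌉ = n/2` in `ℕ`.) -/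
theorem stmt_2 {V : Type*} [Fintype V] [DecidableEq V] (G : SimpleGraph V)
    [DecidableRel G.Adj] (n : ℕ) (hn : Fintype.card V = n) (hnb : ¬ G.Colorable 2)
    (hl : kthEig (SKab ((n - 1) / 2) (n / 2)) 0 ≤ kthEig G 0) :
    ¬ G.CliqueFree 3 ∨ Nonempty (G ≃g SKab ((n - 1) / 2) (n / 2)) := by
  by_cases hG : G.CliqueFree 3
  · have hn5 : 5 ≤ n := hn ▸ five_le_card_of_cliqueFree_three hG hnb
    have hleft : (n - 1) / 2 = (n - 1) / 2 - 1 + 1 := by omega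
    have hright : n / 2 = n / 2 - 1 + 1 := by omega
    rw [hleft, hright] at hl ⊢
    exact .inr (nonempty_iso_SKab_of_cliqueFree_three hG hnb (by omega) (by omega) (by omega)
      (by omega) hl)
  · exact .inl hG
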